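/- Let κ ≥ 2 and p ≥ 1 be integers and let G be a graph whose vertex set is partitioned into classes V_1,…,V_κ with V_i = {v_i^1,…,v_i^p}, such that no edge joins two vertices of the same class; let M = |E(G)|. Then G has a multicolored clique — a set of κ pairwise adjacent vertices containing exactly one vertex from each class — if and only if some decision tree obtained from the tree T of the multicolored-clique construction by subtree raising operations has exactly 2κ inner nodes and at most M − κ(κ−1)/2 errors on the constructed training set. -/

import Mathlib

/-- The two class labels. -/
inductive Label where
  | blue
  | red
deriving DecidableEq

/-- A decision tree over examples `ι → ℝ` with classes `{blue, red}`:
every inner node carries a feature and a threshold, every leaf a class label.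
An example goes to the left child if its value in the node's feature is at most
the threshold, and to the right child otherwise. -/
inductive DTree (ι : Type) where
  | leaf (c : Label)
  | node (feat : ι) (thr : ℝ) (left right : DTree ι)

namespace DTree

variable {ι : Type}

/-- The class that a decision tree assigns to an example. -/
noncomputable def classify : DTree ι → (ι → ℝ) → Label
  | .leaf c, _ => c
  | .node f t l r, e => if e f ≤ t then l.classify e else r.classify e

/-- The routing path of an example (`false` = left child, `true` = right child);
it is the position of the leaf of the example. -/
noncomputable def route : DTree ι → (ι → ℝ) → List Bool
  | .leaf _, _ => []
  | .node f t l r, e => if e f ≤ t then false :: l.route e else true :: r.route e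

/-- The subtree rooted at a position (`none` if the position is not a node). -/
def subtreeAt : DTree ι → List Bool → Option (DTree ι)
  | T, [] => some T
  | .leaf _, _ :: _ => none
  | .node _ _ l r, b :: p => (if b then r else l).subtreeAt p

/-- Replace the subtree at a given position by another tree. -/
def replaceAt : DTree ι → List Bool → DTree ι → DTree ι
  | _, [], T' => T'
  | .leaf c, _ :: _, _ => .leaf c
  | .node f t l r, b :: p, T' =>
      if b then .node f t l (r.replaceAt p T') else .node f t (l.replaceAt p T') r

/-- The number of inner nodes of a decision tree. -/
def innerCount : DTree ι → ℕ
  | .leaf _ => 0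
  | .node _ _ l r => 1 + l.innerCount + r.innerCount

/-- The position `p` is an inner node of `T`. -/
def IsInnerPos (T : DTree ι) (p : List Bool) : Prop :=
  ∃ f t l r, T.subtreeAt p = some (.node f t l r)

/-- The position `p` is a node of `T`. -/
def IsNodePos (T : DTree ι) (p : List Bool) : Prop :=
  (T.subtreeAt p).isSome

/-- The feature and threshold of the inner node at position `p`. -/
def cutAt (T : DTree ι) (p : List Bool) : Option (ι × ℝ) :=
  match T.subtreeAt p with
  | some (.node f t _ _) => some (f, t)
  | _ => none

/-- The subtree raising operation at position `q` keeping the child in direction `b`: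
the subtree rooted at `q` is replaced by the subtree rooted at its `b`-child; it prunes
the node at `q` together with all inner nodes of the subtree rooted at the other child. -/
def raiseAt (T : DTree ι) (q : List Bool) (b : Bool) : DTree ι :=
  match T.subtreeAt q with
  | some (.node _ _ l r) => T.replaceAt q (if b then r else l)
  | _ => T

end DTree

/-- `E[T,p]`: the examples of `E` whose routing through `T` passes the position `p`. -/
noncomputable def reach {ι : Type} (E : Finset (ι → ℝ)) (T : DTree ι) (p : List Bool) :
    Finset (ι → ℝ) :=
  E.filter fun e => p <+: T.route e

/-- The number of errors of `T` on the training set `(E, lab)`. -/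
noncomputable def errCount {ι : Type} (T : DTree ι) (E : Finset (ι → ℝ))
    (lab : (ι → ℝ) → Label) : ℕ :=
  (E.filter fun e => T.classify e ≠ lab e).card

/-- A most frequent label of the labeled set `(E, lab)` (blue in case of a tie). -/
def majorityLabel {ι : Type} (E : Finset (ι → ℝ)) (lab : (ι → ℝ) → Label) : Label :=
  if (E.filter fun e => lab e = Label.red).card ≤ (E.filter fun e => lab e = Label.blue).card
  then Label.blue else Label.red

/-- One subtree replacement operation: some inner node of `T` is replaced by a leaf
labeled with a most frequent label of the examples reaching it. -/
def ReplStep {ι : Type} (E : Finset (ι → ℝ)) (lab : (ι → ℝ) → Label)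
    (T T' : DTree ι) : Prop :=
  ∃ p, T.IsInnerPos p ∧
    T' = T.replaceAt p (.leaf (majorityLabel (reach E T p) lab))

/-- `T` is a reasonable decision tree for `(E, lab)`: every node is reached by some
example and every leaf carries a most frequent label of the examples reaching it. -/
def Reasonable {ι : Type} (E : Finset (ι → ℝ)) (lab : (ι → ℝ) → Label)
    (T : DTree ι) : Prop :=
  (∀ p, T.IsNodePos p → (reach E T p).Nonempty) ∧
  (∀ p c, T.subtreeAt p = some (.leaf c) → ∀ c' : Label,
    ((reach E T p).filter fun e => lab e = c').card ≤
      ((reach E T p).filter fun e => lab e = c).card)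

/-- Apply a sequence of raising operations (given by positions and kept directions). -/
def applySeq {ι : Type} : DTree ι → List (List Bool × Bool) → DTree ι
  | T, [] => T
  | T, (q, b) :: rest => applySeq (T.raiseAt q b) rest

/-- Each raising operation of the sequence is applied at an inner node. -/
def ValidSeq {ι : Type} : DTree ι → List (List Bool × Bool) → Prop
  | _, [] => True
  | T, (q, b) :: rest => T.IsInnerPos q ∧ ValidSeq (T.raiseAt q b) rest

/-- The total number of inner nodes pruned by a sequence of raising operations. -/
def seqPruned {ι : Type} : DTree ι → List (List Bool × Bool) → ℕ
  | _, [] => 0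
  | T, (q, b) :: rest =>
      (match T.subtreeAt q with
        | some (.node _ _ l r) => 1 + DTree.innerCount (if b then l else r)
        | _ => 0) + seqPruned (T.raiseAt q b) rest

/-- `T'` is obtained from `T` by a (possibly empty) sequence of subtree raising
operations. -/
def RaisedFrom {ι : Type} (T T' : DTree ι) : Prop :=
  ∃ steps, ValidSeq T steps ∧ applySeq T steps = T'

/-- `T'` is obtained from `T` by a sequence of subtree raising operations pruning
exactly `m` inner nodes in total. -/
def RaisedFromPruning {ι : Type} (T : DTree ι) (m : ℕ) (T' : DTree ι) : Prop :=
  ∃ steps, ValidSeq T steps ∧ seqPruned T steps = m ∧ applySeq T steps = T'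

/-- Tracking the position of a node through one raising operation: nodes strictly
below the raised node on the discarded side, and the raised node itself, are pruned
(`none`); all other nodes survive at a possibly shifted position. -/
def stepMap (q : List Bool) (b : Bool) (p : List Bool) : Option (List Bool) :=
  if q <+: p then
    if q ++ [b] <+: p then some (q ++ p.drop (q.length + 1)) else none
  else some p

/-- Tracking the position of a node through a sequence of raising operations. -/
def seqMap : List (List Bool × Bool) → List Bool → Option (List Bool)
  | [], p => some p
  | (q, b) :: rest, p => (stepMap q b p).bind (seqMap rest)

/-- The number of errors of `T` on a multiset of labeled examples. -/
noncomputable def errCountM {ι : Type} (T : DTree ι) (E : Multiset ((ι → ℝ) × Label)) : ℕ :=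
  (E.filter fun q => T.classify q.1 ≠ q.2).card

/-- The default example of the multicolored-clique construction: value `p` in each
feature `d_i^<` (encoded `(i, false)`) and `0` in each feature `d_i^>`
(encoded `(i, true)`). -/
def dflt (κ p : ℕ) : (Fin κ × Bool) → ℝ := fun x => if x.2 then 0 else p

/-- Set both coordinates `d_i^<` and `d_i^>` of an example to the value `val`. -/
def setBoth {κ : ℕ} (i : Fin κ) (val : ℝ) (e : (Fin κ × Bool) → ℝ) :
    (Fin κ × Bool) → ℝ :=
  fun x => if x.1 = i then val else e x

/-- The red edge example of an edge `{v_i^a, v_j^b}` (vertices of `Fin κ × Fin p`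
with 1-based values): value `a` in `d_i^<` and `d_i^>`, value `b` in `d_j^<`
and `d_j^>`, default elsewhere. -/
def edgeEx13 {κ p : ℕ} (u v : Fin κ × Fin p) : (Fin κ × Bool) → ℝ :=
  setBoth u.1 ((u.2 : ℕ) + 1) (setBoth v.1 ((v.2 : ℕ) + 1) (dflt κ p))

/-- The training set of the multicolored-clique construction with `M = |E(G)|`:
one red edge example per edge; `M` identical blue separation examples with value
`a + 1/2` in `d_i^<, d_i^>` for each `i` and each `1 ≤ a ≤ p − 1`; per class `i`,
`M` identical blue examples with value `0` in `d_i^<` and `M` identical blue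
examples with value `p + 1` in `d_i^>`; and `M` identical all-default red
examples. -/
noncomputable def E13 {κ p : ℕ} (G : SimpleGraph (Fin κ × Fin p))
    [DecidableRel G.Adj] : Multiset (((Fin κ × Bool) → ℝ) × Label) :=
  let M := G.edgeFinset.card
  (((Finset.univ ×ˢ Finset.univ).filter
      fun q : (Fin κ × Fin p) × (Fin κ × Fin p) =>
        G.Adj q.1 q.2 ∧ q.1.1 < q.2.1).val.map
      fun q => (edgeEx13 q.1 q.2, Label.red))
  + ((Finset.univ ×ˢ Finset.Icc 1 (p - 1) : Finset (Fin κ × ℕ)).val.bind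
      fun x => Multiset.replicate M
        (setBoth x.1 ((x.2 : ℝ) + 1/2) (dflt κ p), Label.blue))
  + (Finset.univ.val.bind fun i : Fin κ =>
      Multiset.replicate M (Function.update (dflt κ p) (i, false) 0, Label.blue)
      + Multiset.replicate M
          (Function.update (dflt κ p) (i, true) ((p : ℝ) + 1), Label.blue))
  + Multiset.replicate M (dflt κ p, Label.red)

/-- A path of cuts: each list entry `(f, t, contRight)` realizes a cut at feature
`f` with threshold `t`; if `contRight` is true, the left child is a blue leaf and
the path continues to the right, otherwise the right child is a blue leaf and the
path continues to the left. -/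
def chainC {ι : Type} (cuts : List (ι × ℝ × Bool)) (tail : DTree ι) : DTree ι :=
  cuts.foldr (fun c acc =>
    if c.2.2 then DTree.node c.1 c.2.1 (.leaf .blue) acc
    else DTree.node c.1 c.2.1 acc (.leaf .blue)) tail

/-- The input tree of the multicolored-clique construction: for `i = 1, …, κ`
in order, the cuts `d_i^< < c` for `c = 1, …, p` (realized by thresholds
`c − 1/4`, blue leaf on the `< c` side) followed by the cuts `d_i^> > c` for
`c = p, …, 1` (realized by thresholds `c`, blue leaf on the `> c` side); the
continuing child of the last cut is a red leaf. -/
noncomputable def T13 (κ p : ℕ) : DTree (Fin κ × Bool) :=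
  chainC ((List.ofFn fun i : Fin κ =>
      (((List.range p).map fun c =>
          ((i, false), ((c : ℝ) + 1) - 1/4, true))
        ++ ((List.range p).reverse.map fun c =>
          ((i, true), ((c : ℝ) + 1), false))))).flatten
    (.leaf .red)

section RaisingOperations

variable {ι : Type}

theorem DTree.raiseAt_leaf (c : Label) (q : List Bool) (b : Bool) :
    (DTree.leaf c : DTree ι).raiseAt q b = .leaf c := by
  cases q <;> rfl

theorem DTree.raiseAt_node_true (f : ι) (t : ℝ) (l r : DTree ι) (q : List Bool) (b : Bool) :
    (DTree.node f t l r).raiseAt (true :: q) b = .node f t l (r.raiseAt q b) := by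
  simp only [DTree.raiseAt, DTree.subtreeAt, DTree.replaceAt, if_true]
  split <;> rfl

theorem DTree.raiseAt_node_false (f : ι) (t : ℝ) (l r : DTree ι) (q : List Bool) (b : Bool) :
    (DTree.node f t l r).raiseAt (false :: q) b = .node f t (l.raiseAt q b) r := by
  simp only [DTree.raiseAt, DTree.subtreeAt, DTree.replaceAt, Bool.false_eq_true, if_false]
  split <;> rfl

theorem RaisedFrom.refl (T : DTree ι) : RaisedFrom T T := ⟨[], trivial, rfl⟩

theorem RaisedFrom.node_right {r r' : DTree ι} (h : RaisedFrom r r') (f : ι) (t : ℝ)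
    (l : DTree ι) : RaisedFrom (.node f t l r) (.node f t l r') := by
  obtain ⟨steps, hv, rfl⟩ := h
  induction steps generalizing r with
  | nil => exact .refl _
  | cons s rest ih =>
    obtain ⟨q, b⟩ := s
    obtain ⟨steps', hv', he'⟩ := ih hv.2
    refine ⟨(true :: q, b) :: steps', ⟨?_, ?_⟩, ?_⟩
    · simpa [DTree.IsInnerPos, DTree.subtreeAt] using hv.1
    · rwa [DTree.raiseAt_node_true]
    · rwa [applySeq, DTree.raiseAt_node_true]

theorem RaisedFrom.node_left {l l' : DTree ι} (h : RaisedFrom l l') (f : ι) (t : ℝ)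
    (r : DTree ι) : RaisedFrom (.node f t l r) (.node f t l' r) := by
  obtain ⟨steps, hv, rfl⟩ := h
  induction steps generalizing l with
  | nil => exact .refl _
  | cons s rest ih =>
    obtain ⟨q, b⟩ := s
    obtain ⟨steps', hv', he'⟩ := ih hv.2
    refine ⟨(false :: q, b) :: steps', ⟨?_, ?_⟩, ?_⟩
    · simpa [DTree.IsInnerPos, DTree.subtreeAt] using hv.1
    · rwa [DTree.raiseAt_node_false]
    · rwa [applySeq, DTree.raiseAt_node_false]

theorem RaisedFrom.of_root {f : ι} {t : ℝ} {l r T' : DTree ι} (b : Bool)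
    (h : RaisedFrom (if b then r else l) T') : RaisedFrom (.node f t l r) T' := by
  obtain ⟨steps, hv, he⟩ := h
  exact ⟨([], b) :: steps, ⟨⟨f, t, l, r, rfl⟩, hv⟩, he⟩

theorem chainC_cons (x : ι × ℝ × Bool) (L : List (ι × ℝ × Bool)) (T : DTree ι) :
    chainC (x :: L) T = if x.2.2 then .node x.1 x.2.1 (.leaf .blue) (chainC L T)
      else .node x.1 x.2.1 (chainC L T) (.leaf .blue) := rfl

/-- Raising operations can delete any set of cuts from a path of cuts. -/
theorem raisedFrom_chainC_of_sublist {L' L : List (ι × ℝ × Bool)} (h : L'.Sublist L)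
    (T : DTree ι) : RaisedFrom (chainC L T) (chainC L' T) := by
  induction h with
  | slnil => exact .refl _
  | cons x _ ih =>
    rw [chainC_cons]
    split
    · exact .of_root true ih
    · exact .of_root false ih
  | cons_cons x _ ih =>
    rw [chainC_cons, chainC_cons]
    split
    · exact ih.node_right _ _ _
    · exact ih.node_left _ _ _

theorem exists_raiseAt_chainC (L : List (ι × ℝ × Bool)) (c : Label) (q : List Bool) (b : Bool) :
    ∃ L' c', L'.Sublist L ∧ (chainC L (.leaf c)).raiseAt q b = chainC L' (.leaf c') := by
  induction L generalizing q with
  | nil => exact ⟨[], c, .refl _, DTree.raiseAt_leaf c q b⟩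
  | cons x L ih =>
    obtain ⟨f, t, s⟩ := x
    cases q with
    | nil =>
      cases s <;> cases b
      · exact ⟨L, c, List.sublist_cons_self _ _, rfl⟩
      · exact ⟨[], .blue, List.nil_sublist _, rfl⟩
      · exact ⟨[], .blue, List.nil_sublist _, rfl⟩
      · exact ⟨L, c, List.sublist_cons_self _ _, rfl⟩
    | cons d q =>
      obtain ⟨L', c', hL', he⟩ := ih q
      cases s <;> cases d
      · refine ⟨(f, t, false) :: L', c', hL'.cons_cons _, ?_⟩
        simp [chainC_cons, DTree.raiseAt_node_false, he]
      · refine ⟨(f, t, false) :: L, c, .refl _, ?_⟩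
        simp [chainC_cons, DTree.raiseAt_node_true, DTree.raiseAt_leaf]
      · refine ⟨(f, t, true) :: L, c, .refl _, ?_⟩
        simp [chainC_cons, DTree.raiseAt_node_false, DTree.raiseAt_leaf]
      · refine ⟨(f, t, true) :: L', c', hL'.cons_cons _, ?_⟩
        simp [chainC_cons, DTree.raiseAt_node_true, he]

/-- Every tree raised from a path of cuts is a path formed by some of these cuts. -/
theorem RaisedFrom.exists_eq_chainC {L : List (ι × ℝ × Bool)} {c : Label} {T' : DTree ι}
    (h : RaisedFrom (chainC L (.leaf c)) T') :
    ∃ L' c', L'.Sublist L ∧ T' = chainC L' (.leaf c') := by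
  obtain ⟨steps, -, rfl⟩ := h
  induction steps generalizing L c with
  | nil => exact ⟨L, c, .refl _, rfl⟩
  | cons s rest ih =>
    obtain ⟨L₁, c₁, h₁, e₁⟩ := exists_raiseAt_chainC L c s.1 s.2
    obtain ⟨L₂, c₂, h₂, e₂⟩ := ih (L := L₁) (c := c₁)
    exact ⟨L₂, c₂, h₂.trans h₁, by rw [← e₂, ← e₁]; rfl⟩

theorem innerCount_chainC (L : List (ι × ℝ × Bool)) (c : Label) :
    (chainC L (.leaf c)).innerCount = L.length := by
  induction L with
  | nil => rfl
  | cons x L ih =>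
    rw [chainC_cons]
    split <;> simp [DTree.innerCount, ih] <;> omega

/-- The example `e` follows the path at the cut `x` instead of ending in the blue leaf. -/
def Passes (x : ι × ℝ × Bool) (e : ι → ℝ) : Prop :=
  if x.2.2 then x.2.1 < e x.1 else e x.1 ≤ x.2.1

theorem classify_chainC_eq_red_iff (L : List (ι × ℝ × Bool)) (c : Label) (e : ι → ℝ) :
    (chainC L (.leaf c)).classify e = .red ↔ c = .red ∧ ∀ x ∈ L, Passes x e := by
  induction L with
  | nil => simp [chainC, DTree.classify]
  | cons x L ih =>
    obtain ⟨f, t, s⟩ := x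
    cases s
    · by_cases h : e f ≤ t <;> simp [chainC_cons, DTree.classify, Passes, h, ih]
    · by_cases h : e f ≤ t
      · simp [chainC_cons, DTree.classify, Passes, h]
      · simp [chainC_cons, DTree.classify, Passes, h, ih, not_le.mp h]

end RaisingOperations

section ErrorCounts

variable {ι : Type}

theorem errCountM_add (T : DTree ι) (A B : Multiset ((ι → ℝ) × Label)) :
    errCountM T (A + B) = errCountM T A + errCountM T B := by
  simp [errCountM]

theorem errCountM_mono (T : DTree ι) {A B : Multiset ((ι → ℝ) × Label)} (h : A ≤ B) :
    errCountM T A ≤ errCountM T B :=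
  Multiset.card_le_card (Multiset.filter_le_filter _ h)

theorem errCountM_eq_zero (T : DTree ι) {A : Multiset ((ι → ℝ) × Label)}
    (h : ∀ q ∈ A, T.classify q.1 = q.2) : errCountM T A = 0 := by
  simpa [errCountM, Multiset.filter_eq_nil] using fun a b hab => h (a, b) hab

/-- An example occurring more often than the number of errors is classified correctly. -/
theorem classify_eq_of_errCountM_lt {T : DTree ι} {A : Multiset ((ι → ℝ) × Label)} {n : ℕ}
    {q : (ι → ℝ) × Label} (hq : Multiset.replicate n q ≤ A) (h : errCountM T A < n) :
    T.classify q.1 = q.2 := by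
  by_contra hne
  have h₁ := errCountM_mono T hq
  have h₂ : errCountM T (Multiset.replicate n q) = n := by
    rw [errCountM, Multiset.filter_eq_self.2, Multiset.card_replicate]
    intro a ha
    rwa [Multiset.eq_of_mem_replicate ha]
  omega

end ErrorCounts

section Counting

theorem card_filter_fst_lt_snd (κ : ℕ) :
    ((Finset.univ.filter fun x : Fin κ × Fin κ => x.1 < x.2).card : ℤ)
      = (κ : ℤ) * ((κ : ℤ) - 1) / 2 := by
  have hswap : (Finset.univ.filter fun x : Fin κ × Fin κ => x.2 < x.1).card
      = (Finset.univ.filter fun x : Fin κ × Fin κ => x.1 < x.2).card :=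
    Finset.card_bij (fun x _ => x.swap) (by simp) (by simp) (by simp)
  have hoff : (Finset.univ.filter fun x : Fin κ × Fin κ => x.1 < x.2)
      ∪ (Finset.univ.filter fun x : Fin κ × Fin κ => x.2 < x.1)
      = (Finset.univ : Finset (Fin κ)).offDiag := by
    ext x
    simp [lt_or_lt_iff_ne]
  have hcard := congrArg Finset.card hoff
  rw [Finset.card_union_of_disjoint, hswap, Finset.offDiag_card, Finset.card_univ,
    Fintype.card_fin] at hcard
  · have hle : κ ≤ κ * κ := Nat.le_mul_self κ
    have : (κ : ℤ) * ((κ : ℤ) - 1) = (κ * κ - κ : ℕ) := by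
      push_cast [hle]
      ring
    omega
  · rw [Finset.disjoint_filter]
    exact fun x _ h => h.not_gt

/-- The edges of `G`, oriented from the class of smaller index to the one of larger index. -/
def orientedEdges {κ p : ℕ} (G : SimpleGraph (Fin κ × Fin p)) [DecidableRel G.Adj] :
    Finset ((Fin κ × Fin p) × (Fin κ × Fin p)) :=
  (Finset.univ ×ˢ Finset.univ).filter fun q => G.Adj q.1 q.2 ∧ q.1.1 < q.2.1

theorem mem_orientedEdges {κ p : ℕ} {G : SimpleGraph (Fin κ × Fin p)} [DecidableRel G.Adj]
    {q : (Fin κ × Fin p) × (Fin κ × Fin p)} :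
    q ∈ orientedEdges G ↔ G.Adj q.1 q.2 ∧ q.1.1 < q.2.1 := by
  simp [orientedEdges]

theorem card_orientedEdges {κ p : ℕ} {G : SimpleGraph (Fin κ × Fin p)} [DecidableRel G.Adj]
    (hpart : ∀ u v : Fin κ × Fin p, G.Adj u v → u.1 ≠ v.1) :
    (orientedEdges G).card = G.edgeFinset.card := by
  refine Finset.card_bij (fun q _ => s(q.1, q.2)) ?_ ?_ ?_
  · intro q hq
    simpa using (mem_orientedEdges.1 hq).1
  · rintro ⟨u, v⟩ h ⟨u', v'⟩ h' heq
    rcases Sym2.eq_iff.1 heq with ⟨rfl, rfl⟩ | ⟨rfl, rfl⟩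
    · rfl
    · exact absurd (mem_orientedEdges.1 h).2 (mem_orientedEdges.1 h').2.not_gt
  · intro s hs
    induction s using Sym2.ind with
    | _ u v =>
      have huv : G.Adj u v := by simpa using hs
      rcases (hpart u v huv).lt_or_gt with hlt | hlt
      · exact ⟨(u, v), mem_orientedEdges.2 ⟨huv, hlt⟩, rfl⟩
      · exact ⟨(v, u), mem_orientedEdges.2 ⟨huv.symm, hlt⟩, Sym2.eq_swap⟩

end Counting

section Cuts

variable {κ p : ℕ}

/-- The cut `d_i^< < c + 1` of the path of cuts. -/
noncomputable def lowerCut (i : Fin κ) (c : ℕ) : (Fin κ × Bool) × ℝ × Bool :=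
  ((i, false), ((c : ℝ) + 1) - 1/4, true)

/-- The cut `d_i^> > c + 1` of the path of cuts. -/
noncomputable def upperCut (i : Fin κ) (c : ℕ) : (Fin κ × Bool) × ℝ × Bool :=
  ((i, true), (c : ℝ) + 1, false)

theorem passes_lowerCut (i : Fin κ) (c : ℕ) (e : Fin κ × Bool → ℝ) :
    Passes (lowerCut i c) e ↔ (c : ℝ) + 1 - 1/4 < e (i, false) := by
  simp [Passes, lowerCut]

theorem passes_upperCut (i : Fin κ) (c : ℕ) (e : Fin κ × Bool → ℝ) :
    Passes (upperCut i c) e ↔ e (i, true) ≤ (c : ℝ) + 1 := by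
  simp [Passes, upperCut]

/-- The cuts of `T13 κ p`, from the root downwards. -/
noncomputable def allCuts (κ p : ℕ) : List ((Fin κ × Bool) × ℝ × Bool) :=
  (List.ofFn fun i : Fin κ =>
    (List.range p).map (lowerCut i) ++ (List.range p).reverse.map (upperCut i)).flatten

theorem T13_eq_chainC (κ p : ℕ) : T13 κ p = chainC (allCuts κ p) (.leaf .red) := by
  have hcast : ∀ l : List ℕ, (do let a ← l; pure (a : ℝ)) = l.map (fun a : ℕ => (a : ℝ)) :=
    fun l => bind_pure_comp _ l
  simp only [T13, allCuts, hcast, List.map_map, Function.comp_def]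
  rfl

theorem mem_allCuts {x : (Fin κ × Bool) × ℝ × Bool} :
    x ∈ allCuts κ p ↔ ∃ (i : Fin κ) (c : Fin p), x = lowerCut i c ∨ x = upperCut i c := by
  simp only [allCuts, List.mem_flatten, List.mem_ofFn, exists_exists_eq_and, List.mem_append,
    List.mem_map, List.mem_range, List.mem_reverse]
  constructor
  · rintro ⟨i, ⟨c, hc, rfl⟩ | ⟨c, hc, rfl⟩⟩
    · exact ⟨i, ⟨c, hc⟩, .inl rfl⟩
    · exact ⟨i, ⟨c, hc⟩, .inr rfl⟩
  · rintro ⟨i, c, rfl | rfl⟩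
    · exact ⟨i, .inl ⟨c, c.2, rfl⟩⟩
    · exact ⟨i, .inr ⟨c, c.2, rfl⟩⟩

/-- The two cuts per class that isolate the vertices chosen by `f`. -/
noncomputable def choiceCuts (f : Fin κ → Fin p) : List ((Fin κ × Bool) × ℝ × Bool) :=
  (List.ofFn fun i : Fin κ => [lowerCut i (f i), upperCut i (f i)]).flatten

theorem mem_choiceCuts {f : Fin κ → Fin p} {x : (Fin κ × Bool) × ℝ × Bool} :
    x ∈ choiceCuts f ↔ ∃ i, x = lowerCut i (f i) ∨ x = upperCut i (f i) := by
  simp [choiceCuts, List.mem_flatten, List.mem_ofFn]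

theorem length_choiceCuts (f : Fin κ → Fin p) : (choiceCuts f).length = 2 * κ := by
  simp [choiceCuts, List.length_flatten, List.map_ofFn, Function.comp_def, mul_comm]

theorem flatten_ofFn_sublist {α : Type} {n : ℕ} {g h : Fin n → List α}
    (hgh : ∀ i, (g i).Sublist (h i)) :
    (List.ofFn g).flatten.Sublist (List.ofFn h).flatten := by
  induction n with
  | zero => simp
  | succ n ih =>
    simp only [List.ofFn_succ, List.flatten_cons]
    exact (hgh 0).append (ih fun i => hgh i.succ)

theorem choiceCuts_sublist (f : Fin κ → Fin p) : (choiceCuts f).Sublist (allCuts κ p) := by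
  refine flatten_ofFn_sublist fun i => ?_
  exact List.Sublist.append (l₁ := [lowerCut i (f i)]) (r₁ := [upperCut i (f i)])
    (List.singleton_sublist.2 (List.mem_map_of_mem (by simp)))
    (List.singleton_sublist.2 (List.mem_map_of_mem (by simp)))

/-- The example `e` satisfies `c i + 1 ≤ d_i^<` and `d_i^> ≤ c' i + 1` for every class `i`,
where the first bound is relaxed by `1/4`. -/
def InBox (c c' : Fin κ → Fin p) (e : Fin κ × Bool → ℝ) : Prop :=
  ∀ i, ((c i : ℕ) : ℝ) + 1 - 1/4 < e (i, false) ∧ e (i, true) ≤ ((c' i : ℕ) : ℝ) + 1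

theorem forall_passes_iff_inBox {L : List ((Fin κ × Bool) × ℝ × Bool)} {c c' : Fin κ → Fin p}
    (hL : ∀ x, x ∈ L ↔ ∃ i, x = lowerCut i (c i) ∨ x = upperCut i (c' i))
    (e : Fin κ × Bool → ℝ) : (∀ x ∈ L, Passes x e) ↔ InBox c c' e := by
  constructor
  · intro h i
    exact ⟨(passes_lowerCut i _ e).1 (h _ ((hL _).2 ⟨i, .inl rfl⟩)),
      (passes_upperCut i _ e).1 (h _ ((hL _).2 ⟨i, .inr rfl⟩))⟩
  · intro h x hx
    obtain ⟨i, rfl | rfl⟩ := (hL x).1 hx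
    · exact (passes_lowerCut i _ e).2 (h i).1
    · exact (passes_upperCut i _ e).2 (h i).2

theorem dflt_low (c : Fin p) (i : Fin κ) : ((c : ℕ) : ℝ) + 1 - 1/4 < dflt κ p (i, false) := by
  have : ((c : ℕ) : ℝ) + 1 ≤ p := by exact_mod_cast c.2
  simp only [dflt, Bool.false_eq_true, if_false]
  linarith

theorem dflt_high (c : Fin p) (i : Fin κ) : dflt κ p (i, true) ≤ ((c : ℕ) : ℝ) + 1 := by
  simp only [dflt, if_true]
  positivity

theorem inBox_dflt (c c' : Fin κ → Fin p) : InBox c c' (dflt κ p) :=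
  fun i => ⟨dflt_low _ i, dflt_high _ i⟩

theorem inBox_setBoth_iff {c c' : Fin κ → Fin p} {i : Fin κ} {a : ℝ} {e : Fin κ × Bool → ℝ} :
    InBox c c' (setBoth i a e) ↔
      (((c i : ℕ) : ℝ) + 1 - 1/4 < a ∧ a ≤ ((c' i : ℕ) : ℝ) + 1) ∧
      ∀ j ≠ i, ((c j : ℕ) : ℝ) + 1 - 1/4 < e (j, false) ∧ e (j, true) ≤ ((c' j : ℕ) : ℝ) + 1 := by
  constructor
  · intro h
    refine ⟨by simpa [setBoth] using h i, fun j hj => by simpa [setBoth, hj] using h j⟩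
  · rintro ⟨h, h'⟩ j
    by_cases hj : j = i
    · subst hj
      simpa [setBoth] using h
    · simpa [setBoth, hj] using h' j hj

theorem low_lt_natCast_iff (c n : ℕ) : (c : ℝ) + 1 - 1/4 < (n : ℝ) + 1 ↔ c ≤ n := by
  constructor
  · intro h
    have : (c : ℝ) < n + 1 := by linarith
    exact Nat.lt_succ_iff.1 (by exact_mod_cast this)
  · intro h
    have : (c : ℝ) ≤ n := by exact_mod_cast h
    linarith

theorem inBox_separation_iff {c c' : Fin κ → Fin p} {i : Fin κ} {a : ℕ} :
    InBox c c' (setBoth i ((a : ℝ) + 1/2) (dflt κ p)) ↔ (c i : ℕ) < a ∧ a ≤ c' i := by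
  rw [inBox_setBoth_iff]
  have hrest : ∀ j ≠ i, ((c j : ℕ) : ℝ) + 1 - 1/4 < dflt κ p (j, false) ∧
      dflt κ p (j, true) ≤ ((c' j : ℕ) : ℝ) + 1 := fun j _ => inBox_dflt c c' j
  rw [and_iff_left hrest]
  refine and_congr ⟨fun h => ?_, fun h => ?_⟩ ⟨fun h => ?_, fun h => ?_⟩
  · have : ((c i : ℕ) : ℝ) < a := by linarith
    exact_mod_cast this
  · have : ((c i : ℕ) : ℝ) + 1 ≤ a := by exact_mod_cast h
    linarith
  · have : (a : ℝ) < (c' i : ℕ) + 1 := by linarith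
    exact Nat.lt_succ_iff.1 (by exact_mod_cast this)
  · have : (a : ℝ) ≤ (c' i : ℕ) := by exact_mod_cast h
    linarith

theorem inBox_edgeEx13_iff {c c' : Fin κ → Fin p} {u v : Fin κ × Fin p} (huv : u.1 ≠ v.1) :
    InBox c c' (edgeEx13 u v) ↔
      (c u.1 ≤ u.2 ∧ u.2 ≤ c' u.1) ∧ (c v.1 ≤ v.2 ∧ v.2 ≤ c' v.1) := by
  have hval : ∀ (x y z : Fin p), (((x : ℕ) : ℝ) + 1 - 1/4 < ((y : ℕ) : ℝ) + 1 ∧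
      ((y : ℕ) : ℝ) + 1 ≤ ((z : ℕ) : ℝ) + 1) ↔ x ≤ y ∧ y ≤ z := by
    intro x y z
    rw [low_lt_natCast_iff, add_le_add_iff_right, Nat.cast_le, Fin.val_fin_le, Fin.val_fin_le]
  rw [edgeEx13, inBox_setBoth_iff, hval]
  refine and_congr_right fun _ => ⟨fun h => ?_, fun h j _ => ?_⟩
  · simpa [setBoth, huv.symm, ← hval] using h v.1 huv.symm
  · by_cases hj : j = v.1
    · subst hj
      simpa [setBoth, ← hval] using h
    · simpa [setBoth, hj] using inBox_dflt c c' j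

end Cuts

section TrainingSet

variable {κ p : ℕ} {G : SimpleGraph (Fin κ × Fin p)} [DecidableRel G.Adj]

theorem separation_le_E13 (i : Fin κ) {a : ℕ} (ha : 1 ≤ a) (hap : a < p) :
    Multiset.replicate G.edgeFinset.card (setBoth i ((a : ℝ) + 1/2) (dflt κ p), Label.blue)
      ≤ E13 G := by
  refine le_trans ?_ (Multiset.le_add_right _ _)
  refine le_trans ?_ (Multiset.le_add_right _ _)
  refine le_trans ?_ (Multiset.le_add_left _ _)
  exact Multiset.le_bind (f := fun x : Fin κ × ℕ => Multiset.replicate G.edgeFinset.card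
    (setBoth x.1 ((x.2 : ℝ) + 1/2) (dflt κ p), Label.blue)) _ (x := (i, a))
    (by simp; omega)

theorem border_le_E13 (i : Fin κ) :
    Multiset.replicate G.edgeFinset.card (Function.update (dflt κ p) (i, false) 0, Label.blue)
      + Multiset.replicate G.edgeFinset.card
        (Function.update (dflt κ p) (i, true) ((p : ℝ) + 1), Label.blue) ≤ E13 G := by
  refine le_trans ?_ (Multiset.le_add_right _ _)
  refine le_trans ?_ (Multiset.le_add_left _ _)
  exact Multiset.le_bind (f := fun i : Fin κ =>
    Multiset.replicate G.edgeFinset.card (Function.update (dflt κ p) (i, false) 0, Label.blue)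
      + Multiset.replicate G.edgeFinset.card
        (Function.update (dflt κ p) (i, true) ((p : ℝ) + 1), Label.blue)) _
    (Finset.mem_univ i)

theorem dflt_le_E13 :
    Multiset.replicate G.edgeFinset.card (dflt κ p, Label.red) ≤ E13 G :=
  Multiset.le_add_left _ _

theorem edges_le_E13 :
    (orientedEdges G).val.map (fun q => (edgeEx13 q.1 q.2, Label.red)) ≤ E13 G :=
  ((Multiset.le_add_right _ _).trans (Multiset.le_add_right _ _)).trans
    (Multiset.le_add_right _ _)

/-- The oriented edges whose examples are classified correctly by `T`. -/
noncomputable def correctEdges (G : SimpleGraph (Fin κ × Fin p)) [DecidableRel G.Adj]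
    (T : DTree (Fin κ × Bool)) : Finset ((Fin κ × Fin p) × (Fin κ × Fin p)) :=
  (orientedEdges G).filter fun q => T.classify (edgeEx13 q.1 q.2) = .red

theorem errCountM_edges_add_card_correctEdges
    (hpart : ∀ u v : Fin κ × Fin p, G.Adj u v → u.1 ≠ v.1) (T : DTree (Fin κ × Bool)) :
    errCountM T ((orientedEdges G).val.map fun q => (edgeEx13 q.1 q.2, Label.red))
      + (correctEdges G T).card = G.edgeFinset.card := by
  rw [← card_orientedEdges hpart, add_comm, correctEdges,
    ← Finset.card_filter_add_card_filter_not (s := orientedEdges G)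
      (fun q => T.classify (edgeEx13 q.1 q.2) = .red)]
  congr 1
  rw [errCountM, Multiset.filter_map, Multiset.card_map]
  rfl

theorem Label.eq_blue_iff_ne_red {c : Label} : c = .blue ↔ c ≠ .red := by
  cases c <;> simp

/-- A tree that is right on all examples but the edge examples errs on the remaining edges. -/
theorem errCountM_E13_eq {T : DTree (Fin κ × Bool)}
    (hsep : ∀ (i : Fin κ) (a : ℕ), T.classify (setBoth i ((a : ℝ) + 1/2) (dflt κ p)) = .blue)
    (hlow : ∀ i, T.classify (Function.update (dflt κ p) (i, false) 0) = .blue)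
    (hhigh : ∀ i, T.classify (Function.update (dflt κ p) (i, true) ((p : ℝ) + 1)) = .blue)
    (hdflt : T.classify (dflt κ p) = .red) :
    errCountM T (E13 G) =
      errCountM T ((orientedEdges G).val.map fun q => (edgeEx13 q.1 q.2, Label.red)) := by
  rw [E13, errCountM_add, errCountM_add, errCountM_add]
  simp only [add_assoc]
  refine Nat.add_eq_left.2 ?_
  simp only [Nat.add_eq_zero_iff]
  refine ⟨errCountM_eq_zero T ?_, errCountM_eq_zero T ?_, errCountM_eq_zero T ?_⟩
  · intro q hq
    obtain ⟨x, -, hx⟩ := Multiset.mem_bind.1 hq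
    rw [Multiset.eq_of_mem_replicate hx]
    exact hsep _ _
  · intro q hq
    obtain ⟨i, -, hi⟩ := Multiset.mem_bind.1 hq
    rcases Multiset.mem_add.1 hi with h | h <;> rw [Multiset.eq_of_mem_replicate h]
    · exact hlow i
    · exact hhigh i
  · intro q hq
    rw [Multiset.eq_of_mem_replicate hq]
    exact hdflt

end TrainingSet

section Equivalence

variable {κ p : ℕ} {G : SimpleGraph (Fin κ × Fin p)} [DecidableRel G.Adj]

/-- The pair of vertices chosen by `f` in a pair of classes. -/
def chosenPair (f : Fin κ → Fin p) (x : Fin κ × Fin κ) : (Fin κ × Fin p) × (Fin κ × Fin p) :=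
  ((x.1, f x.1), (x.2, f x.2))

theorem chosenPair_injective (f : Fin κ → Fin p) : Function.Injective (chosenPair f) := by
  rintro ⟨i, j⟩ ⟨i', j'⟩ h
  simp only [chosenPair, Prod.mk.injEq] at h
  exact Prod.ext h.1.1 h.2.1

theorem errCountM_choiceCuts_le (hpart : ∀ u v : Fin κ × Fin p, G.Adj u v → u.1 ≠ v.1)
    {f : Fin κ → Fin p} (hf : ∀ i j : Fin κ, i ≠ j → G.Adj (i, f i) (j, f j)) :
    (errCountM (chainC (choiceCuts f) (.leaf .red)) (E13 G) : ℤ)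
      ≤ (G.edgeFinset.card : ℤ) - (κ : ℤ) * ((κ : ℤ) - 1) / 2 := by
  set T := chainC (choiceCuts f) (.leaf .red)
  have hred : ∀ e, T.classify e = .red ↔ InBox f f e := fun e => by
    rw [classify_chainC_eq_red_iff, forall_passes_iff_inBox fun x => mem_choiceCuts]
    simp
  have hblue : ∀ e, T.classify e = .blue ↔ ¬ InBox f f e := fun e => by
    rw [Label.eq_blue_iff_ne_red, Ne, hred]
  have hE : errCountM T (E13 G) = _ := errCountM_E13_eq (G := G)
    (fun i a => by rw [hblue, inBox_separation_iff]; omega)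
    (fun i => by
      rw [hblue]
      intro h
      have := (h i).1
      rw [Function.update_self] at this
      have : (0 : ℝ) ≤ (f i : ℕ) := Nat.cast_nonneg _
      linarith)
    (fun i => by
      rw [hblue]
      intro h
      have := (h i).2
      rw [Function.update_self] at this
      have : ((f i : ℕ) : ℝ) < p := by exact_mod_cast (f i).2
      linarith)
    ((hred _).2 (inBox_dflt f f))
  have hsub : (Finset.univ.filter fun x : Fin κ × Fin κ => x.1 < x.2).image (chosenPair f)
      ⊆ correctEdges G T := by
    intro q hq
    obtain ⟨x, hx, rfl⟩ := Finset.mem_image.1 hq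
    have hlt : x.1 < x.2 := by simpa using hx
    refine Finset.mem_filter.2 ⟨mem_orientedEdges.2 ⟨hf _ _ hlt.ne, hlt⟩, ?_⟩
    rw [hred, inBox_edgeEx13_iff]
    · simp [chosenPair]
    · exact hlt.ne
  have hcard := Finset.card_le_card hsub
  rw [Finset.card_image_of_injective _ (chosenPair_injective f)] at hcard
  have hM := errCountM_edges_add_card_correctEdges hpart T
  rw [← card_filter_fst_lt_snd]
  omega

/-- A path of `2κ` cuts containing a cut in each feature contains exactly one in each. -/
theorem exists_mem_iff_of_length_eq {L : List ((Fin κ × Bool) × ℝ × Bool)}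
    (hL : L.Sublist (allCuts κ p)) (hlen : L.length = 2 * κ)
    (hcov : ∀ y : Fin κ × Bool, ∃ x ∈ L, x.1 = y) :
    ∃ c c' : Fin κ → Fin p, ∀ x, x ∈ L ↔ ∃ i, x = lowerCut i (c i) ∨ x = upperCut i (c' i) := by
  have hnodup : (L.map Prod.fst).Nodup := by
    rw [← Multiset.coe_nodup, ← Multiset.toFinset_card_eq_card_iff_nodup]
    have huniv : (L.map Prod.fst).toFinset = Finset.univ := by
      ext y
      simpa using hcov y
    simp [huniv, hlen, mul_comm]
  have hinj : ∀ x ∈ L, ∀ y ∈ L, x.1 = y.1 → x = y :=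
    fun x hx y hy => List.inj_on_of_nodup_map hnodup hx hy
  have hlow : ∀ i : Fin κ, ∃ c : Fin p, lowerCut i c ∈ L := by
    intro i
    obtain ⟨x, hx, hxi⟩ := hcov (i, false)
    obtain ⟨j, c, rfl | rfl⟩ := mem_allCuts.1 (hL.subset hx)
    · obtain rfl : j = i := by simpa [lowerCut] using hxi
      exact ⟨c, hx⟩
    · simp [upperCut] at hxi
  have hhigh : ∀ i : Fin κ, ∃ c : Fin p, upperCut i c ∈ L := by
    intro i
    obtain ⟨x, hx, hxi⟩ := hcov (i, true)
    obtain ⟨j, c, rfl | rfl⟩ := mem_allCuts.1 (hL.subset hx)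
    · simp [lowerCut] at hxi
    · obtain rfl : j = i := by simpa [upperCut] using hxi
      exact ⟨c, hx⟩
  choose c hc using hlow
  choose c' hc' using hhigh
  refine ⟨c, c', fun x => ⟨fun hx => ?_, ?_⟩⟩
  · obtain ⟨j, a, rfl | rfl⟩ := mem_allCuts.1 (hL.subset hx)
    · exact ⟨j, .inl (hinj _ hx _ (hc j) rfl)⟩
    · exact ⟨j, .inr (hinj _ hx _ (hc' j) rfl)⟩
  · rintro ⟨i, rfl | rfl⟩
    · exact hc i
    · exact hc' i

/-- If changing the default example in one feature yields a blue example, then some cut of the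
path uses this feature. -/
theorem exists_cut_of_classify_update {L : List ((Fin κ × Bool) × ℝ × Bool)}
    (hL : L.Sublist (allCuts κ p)) {y : Fin κ × Bool} {a : ℝ}
    (h : (chainC L (.leaf .red)).classify (Function.update (dflt κ p) y a) = .blue) :
    ∃ x ∈ L, x.1 = y := by
  by_contra! hne
  rw [Label.eq_blue_iff_ne_red, Ne, classify_chainC_eq_red_iff] at h
  refine h ⟨rfl, fun x hx => ?_⟩
  have hxy := hne x hx
  obtain ⟨j, c, rfl | rfl⟩ := mem_allCuts.1 (hL.subset hx)
  · rw [passes_lowerCut, Function.update_of_ne (by exact hxy)]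
    exact dflt_low c j
  · rw [passes_upperCut, Function.update_of_ne (by exact hxy)]
    exact dflt_high c j

theorem exists_clique_of_errCountM_le (hκ : 2 ≤ κ)
    (hpart : ∀ u v : Fin κ × Fin p, G.Adj u v → u.1 ≠ v.1)
    {L : List ((Fin κ × Bool) × ℝ × Bool)} {t : Label}
    (hL : L.Sublist (allCuts κ p)) (hlen : L.length = 2 * κ)
    (herr : (errCountM (chainC L (.leaf t)) (E13 G) : ℤ)
      ≤ (G.edgeFinset.card : ℤ) - (κ : ℤ) * ((κ : ℤ) - 1) / 2) :
    ∃ f : Fin κ → Fin p, ∀ i j : Fin κ, i ≠ j → G.Adj (i, f i) (j, f j) := by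
  rw [← card_filter_fst_lt_snd] at herr
  have hpos : 0 < (Finset.univ.filter fun x : Fin κ × Fin κ => x.1 < x.2).card :=
    Finset.card_pos.2 ⟨(⟨0, by omega⟩, ⟨1, by omega⟩), by simp⟩
  have hlt : errCountM (chainC L (.leaf t)) (E13 G) < G.edgeFinset.card := by omega
  have ht : t = .red := ((classify_chainC_eq_red_iff L t _).1
    (classify_eq_of_errCountM_lt dflt_le_E13 hlt)).1
  subst ht
  set T := chainC L (.leaf .red) with hT
  have hcov : ∀ y : Fin κ × Bool, ∃ x ∈ L, x.1 = y := by
    rintro ⟨i, _ | _⟩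
    · exact exists_cut_of_classify_update hL (classify_eq_of_errCountM_lt
        ((Multiset.le_add_right _ _).trans (border_le_E13 i)) hlt)
    · exact exists_cut_of_classify_update hL (classify_eq_of_errCountM_lt
        ((Multiset.le_add_left _ _).trans (border_le_E13 i)) hlt)
  obtain ⟨c, c', hmem⟩ := exists_mem_iff_of_length_eq hL hlen hcov
  have hred : ∀ e, T.classify e = .red ↔ InBox c c' e := fun e => by
    rw [hT, classify_chainC_eq_red_iff, forall_passes_iff_inBox hmem]
    simp
  have hle : ∀ i, c' i ≤ c i := by
    intro i
    by_contra! hi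
    have hi' : (c i : ℕ) < c' i := hi
    have hsep := classify_eq_of_errCountM_lt
      (separation_le_E13 (G := G) i (a := c i + 1) (by omega) (by omega)) hlt
    rw [Label.eq_blue_iff_ne_red, Ne, hred, inBox_separation_iff] at hsep
    omega
  have hsub : correctEdges G T ⊆
      (Finset.univ.filter fun x : Fin κ × Fin κ => x.1 < x.2).image (chosenPair c) := by
    rintro ⟨u, v⟩ hq
    obtain ⟨hq, hq'⟩ := Finset.mem_filter.1 hq
    have hlt := (mem_orientedEdges.1 hq).2
    obtain ⟨⟨h₁, h₂⟩, h₃, h₄⟩ := (inBox_edgeEx13_iff hlt.ne).1 ((hred _).1 hq')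
    refine Finset.mem_image.2 ⟨(u.1, v.1), by simpa using hlt, ?_⟩
    exact Prod.ext (Prod.ext rfl (h₁.antisymm (h₂.trans (hle _))))
      (Prod.ext rfl (h₃.antisymm (h₄.trans (hle _))))
  have hM := errCountM_edges_add_card_correctEdges hpart T
  have hmono := errCountM_mono T (edges_le_E13 (G := G))
  have hcard := Finset.card_image_of_injective
    (Finset.univ.filter fun x : Fin κ × Fin κ => x.1 < x.2) (chosenPair_injective c)
  have heq := Finset.eq_of_subset_of_card_le hsub (by omega)
  have hadj : ∀ i j : Fin κ, i < j → G.Adj (i, c i) (j, c j) := by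
    intro i j hij
    have hin : chosenPair c (i, j) ∈ correctEdges G T :=
      heq ▸ Finset.mem_image_of_mem _ (by simpa using hij)
    exact (mem_orientedEdges.1 (Finset.mem_filter.1 hin).1).1
  refine ⟨c, fun i j hij => ?_⟩
  rcases hij.lt_or_gt with h | h
  · exact hadj i j h
  · exact (hadj j i h).symm

end Equivalence

/-- Let `2 ≤ κ`, `1 ≤ p`, and let `G` be a graph on the vertex
classes `V_i = {i} × Fin p` with no edge inside a class, and `M = |E(G)|`. Then `G`
has a multicolored clique (one vertex per class, pairwise adjacent) iff some
decision tree obtained from `T13` by subtree raising operations has exactly `2κ`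
inner nodes and at most `M − κ(κ−1)/2` errors on the constructed training set. -/
theorem stmt13 (κ p : ℕ) (hκ : 2 ≤ κ) (hp : 1 ≤ p)
    (G : SimpleGraph (Fin κ × Fin p)) [DecidableRel G.Adj]
    (hpart : ∀ u v : Fin κ × Fin p, G.Adj u v → u.1 ≠ v.1) :
    (∃ f : Fin κ → Fin p, ∀ i j : Fin κ, i ≠ j → G.Adj (i, f i) (j, f j))
    ↔ ∃ T' : DTree (Fin κ × Bool), RaisedFrom (T13 κ p) T'
        ∧ T'.innerCount = 2 * κ
        ∧ (errCountM T' (E13 G) : ℤ)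
            ≤ (G.edgeFinset.card : ℤ) - (κ : ℤ) * ((κ : ℤ) - 1) / 2 := by
  constructor
  · rintro ⟨f, hf⟩
    refine ⟨chainC (choiceCuts f) (.leaf .red), ?_, ?_, errCountM_choiceCuts_le hpart hf⟩
    · rw [T13_eq_chainC]
      exact raisedFrom_chainC_of_sublist (choiceCuts_sublist f) _
    · rw [innerCount_chainC, length_choiceCuts]
  · rintro ⟨T', hT', hcount, herr⟩
    rw [T13_eq_chainC] at hT'
    obtain ⟨L, t, hL, rfl⟩ := hT'.exists_eq_chainC
    rw [innerCount_chainC] at hcount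
    exact exists_clique_of_errCountM_le hκ hpart hL hcount herr
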